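/- For every integer N ≥ 0, as λ → +∞ through real values, ∫_0^1 e^{−λ(−x − log(1−x))} dx = Σ_{n=0}^{N−1} Γ((n+1)/2) (−1)^n c_n λ^{−(n+1)/2} + O(λ^{−(N+1)/2}); that is, the coefficients for this integral are (−1)^n c_n, where c_n are the coefficients for ∫_0^{+∞} e^{−λ(x − log(1+x))} dx. -/

import Mathlib

open Finset MeasureTheory Real Asymptotics Filter

/-- Partial ordinary Bell polynomials: `obell f n k` is the coefficient of `x^n` in
`(∑_{m ≥ 1} f m * x^m)^k`, i.e. `B_{n,k}(f₁, …, f_{n-k+1})`. -/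
noncomputable def obell (f : ℕ → ℝ) (n k : ℕ) : ℝ :=
  PowerSeries.coeff n ((PowerSeries.mk fun m => if m = 0 then 0 else f m) ^ k)

/-- The coefficients of the asymptotic expansion of `∫_0^∞ e^{-λ(x - log(1+x))} dx`:
`c_n = (1/(2Γ((n+1)/2))) ∑_{k=0}^n ((-1)^k 2^{(n+1)/2+k}/k!) Γ((n+1)/2+k)
B_{n,k}(a₁,…,a_{n-k+1})` with `a_m = (-1)^m/(m+2)`. -/
noncomputable def laplaceCoeff (n : ℕ) : ℝ :=
  (1 / (2 * Real.Gamma (((n : ℝ) + 1) / 2))) *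
    ∑ k ∈ Finset.range (n + 1),
      ((-1 : ℝ) ^ k * (2 : ℝ) ^ (((n : ℝ) + 1) / 2 + k) / (Nat.factorial k : ℝ)) *
        Real.Gamma (((n : ℝ) + 1) / 2 + k) *
        obell (fun m => (-1 : ℝ) ^ m / ((m : ℝ) + 2)) n k

/-!
Write the phase as `-x - log (1 - x) = x ^ 2 * f x`, so that `f x ≥ 1 / 2` on `(0, 1)` and `f` has
the asymptotic series `p = ∑ X ^ m / (m + 2)` at `0⁺`. With `t` treated as a variable independent
of `x`, expanding `exp (-t f x)` in powers of `x` produces polynomials in `t` times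
`exp (-t p(0))`, with an error `O(x ^ N exp (-d t))` uniform in `x > 0` and `t ≥ 0`, for any
`d < 1 / 2`. Substituting `t = l x ^ 2` and integrating in `x` turns every term, and the error,
into a Gamma integral. Replacing `x` by `-x` multiplies the coefficient `a_m` of `f` by `(-1) ^ m`,
hence `B_{n,k}` by `(-1) ^ n`, for every `k`.
-/

section

open scoped PowerSeries Topology

section AsymptoticSeries

variable {𝕜 : Type*} [NormedField 𝕜] {F : Filter 𝕜} {f g : 𝕜 → 𝕜} {p q : 𝕜⟦X⟧}

/-- The (possibly divergent) power series `p` is an asymptotic expansion of `f` along `F`, in the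
sense of Poincaré. The intended filters satisfy `F ≤ 𝓝 0`, for instance `𝓝[>] 0`. -/
def HasAsymptoticSeries (F : Filter 𝕜) (f : 𝕜 → 𝕜) (p : 𝕜⟦X⟧) : Prop :=
  ∀ N : ℕ, (fun x => f x - (p.trunc N).eval x) =O[F] fun x => x ^ N

lemma polynomial_eval_isBigO_one (r : Polynomial 𝕜) (hF : F ≤ 𝓝 0) :
    (fun x => r.eval x) =O[F] fun _ => (1 : 𝕜) :=
  ((r.continuous.tendsto 0).mono_left hF).isBigO_one 𝕜

lemma HasAsymptoticSeries.polynomial (r : Polynomial 𝕜) (hF : F ≤ 𝓝 0) :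
    HasAsymptoticSeries F (fun x => r.eval x) (r : 𝕜⟦X⟧) := by
  intro N
  obtain ⟨s, hs⟩ : Polynomial.X ^ N ∣ r - (r : 𝕜⟦X⟧).trunc N := by
    rw [Polynomial.X_pow_dvd_iff]
    intro d hd
    simp [PowerSeries.coeff_trunc, hd]
  have heval (x : 𝕜) : r.eval x - ((r : 𝕜⟦X⟧).trunc N).eval x = x ^ N * s.eval x := by
    simpa using congrArg (Polynomial.eval x) hs
  simpa only [heval, mul_one] using
    (isBigO_refl (fun x : 𝕜 => x ^ N) F).mul (polynomial_eval_isBigO_one s hF)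

lemma HasAsymptoticSeries.const (a : 𝕜) (hF : F ≤ 𝓝 0) :
    HasAsymptoticSeries F (fun _ => a) (PowerSeries.C a) := by
  simpa using HasAsymptoticSeries.polynomial (Polynomial.C a) hF

lemma HasAsymptoticSeries.sub (hf : HasAsymptoticSeries F f p) (hg : HasAsymptoticSeries F g q) :
    HasAsymptoticSeries F (fun x => f x - g x) (p - q) := fun N =>
  ((hf N).sub (hg N)).congr_left fun x => by
    rw [PowerSeries.trunc_sub, Polynomial.eval_sub]; ring

lemma HasAsymptoticSeries.isBigO_one (hf : HasAsymptoticSeries F f p) :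
    f =O[F] fun _ => (1 : 𝕜) := by
  simpa using hf 0

lemma HasAsymptoticSeries.mul (hf : HasAsymptoticSeries F f p) (hg : HasAsymptoticSeries F g q)
    (hF : F ≤ 𝓝 0) : HasAsymptoticSeries F (fun x => f x * g x) (p * q) := by
  intro N
  have hleft : (fun x => (f x - (p.trunc N).eval x) * g x) =O[F] fun x => x ^ N := by
    simpa using (hf N).mul hg.isBigO_one
  have hright : (fun x => (p.trunc N).eval x * (g x - (q.trunc N).eval x)) =O[F]
      fun x => x ^ N := by
    simpa using (polynomial_eval_isBigO_one (p.trunc N) hF).mul (hg N)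
  have htrunc := HasAsymptoticSeries.polynomial (p.trunc N * q.trunc N) hF N
  simp only [Polynomial.eval_mul, Polynomial.coe_mul, PowerSeries.trunc_trunc_mul_trunc] at htrunc
  exact ((hleft.add hright).add htrunc).congr_left fun x => by ring

lemma HasAsymptoticSeries.pow (hf : HasAsymptoticSeries F f p) (hF : F ≤ 𝓝 0) (k : ℕ) :
    HasAsymptoticSeries F (fun x => f x ^ k) (p ^ k) := by
  induction k with
  | zero => simpa using HasAsymptoticSeries.const 1 hF
  | succ k ih => simpa only [pow_succ] using ih.mul hf hF

lemma HasAsymptoticSeries.isBigO_id (hf : HasAsymptoticSeries F f p)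
    (hp : p.constantCoeff = 0) : f =O[F] fun x => x := by
  simpa [PowerSeries.trunc_one_left, hp] using hf 1

lemma HasAsymptoticSeries.tendsto (hf : HasAsymptoticSeries F f p) (hF : F ≤ 𝓝 0) :
    Tendsto f F (𝓝 p.constantCoeff) := by
  have hsub : (fun x => f x - p.constantCoeff) =O[F] fun x => x := by
    simpa [PowerSeries.trunc_one_left] using hf 1
  simpa using (hsub.trans_tendsto hF).add_const p.constantCoeff

end AsymptoticSeries

lemma eval_trunc_eq_sum_range {R : Type*} [CommSemiring R] (p : R⟦X⟧) (N : ℕ) (x : R) :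
    (p.trunc N).eval x = ∑ n ∈ range N, p.coeff n * x ^ n :=
  PowerSeries.eval₂_trunc_eq_sum_range x (RingHom.id R) N p

/-- The coefficient of `X ^ n` in the formal power series `exp (t q)`, as a function of `t`. The
sum stops at `k = n` because `q` is meant to have no constant term. -/
noncomputable def formalExpCoeff (q : ℝ⟦X⟧) (n : ℕ) (t : ℝ) : ℝ :=
  ∑ k ∈ range (n + 1), t ^ k / k.factorial * (q ^ k).coeff n

lemma sum_pow_mul_eval_trunc_pow {q : ℝ⟦X⟧} (hq : q.constantCoeff = 0) (N : ℕ) (t x : ℝ) :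
    ∑ k ∈ range N, t ^ k / k.factorial * ((q ^ k).trunc N).eval x =
      ∑ n ∈ range N, formalExpCoeff q n t * x ^ n := by
  have hcoeff {n k : ℕ} (hnk : n < k) : (q ^ k).coeff n = 0 :=
    PowerSeries.X_pow_dvd_iff.1 (pow_dvd_pow_of_dvd (PowerSeries.X_dvd_iff.2 hq) k) n hnk
  have htrunc {n : ℕ} (hn : n ∈ range N) :
      formalExpCoeff q n t = ∑ k ∈ range N, t ^ k / k.factorial * (q ^ k).coeff n := by
    refine sum_subset (range_subset_range.2 (mem_range.1 hn)) fun k _ hk => ?_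
    rw [hcoeff (by simpa using hk), mul_zero]
  simp_rw [eval_trunc_eq_sum_range, mul_sum, ← mul_assoc]
  rw [sum_comm]
  exact sum_congr rfl fun n hn => by rw [htrunc hn, sum_mul]

lemma abs_exp_sub_sum_le (u : ℝ) (N : ℕ) :
    |exp u - ∑ k ∈ range N, u ^ k / k.factorial| ≤ |u| ^ N * exp |u| := by
  have h := Complex.norm_exp_sub_sum_le_norm_mul_exp u N
  rw [Complex.norm_real] at h
  exact_mod_cast h

lemma pow_mul_exp_neg_isBigO_exp_neg {b d : ℝ} (hdb : d < b) (k : ℕ) :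
    (fun t : ℝ => t ^ k * exp (-(b * t))) =O[𝓟 (Set.Ici 0)] fun t => exp (-(d * t)) := by
  refine isBigO_principal.2 ⟨k.factorial / (b - d) ^ k, fun t (ht : 0 ≤ t) => ?_⟩
  have hpos : 0 < b - d := sub_pos.2 hdb
  have hpow := pow_div_factorial_le_exp ((b - d) * t) (by positivity) k
  rw [norm_of_nonneg (by positivity), norm_of_nonneg (by positivity)]
  calc t ^ k * exp (-(b * t))
      = k.factorial / (b - d) ^ k * (((b - d) * t) ^ k / k.factorial) * exp (-(b * t)) := by
        rw [mul_pow]; field_simp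
    _ ≤ k.factorial / (b - d) ^ k * exp ((b - d) * t) * exp (-(b * t)) := by gcongr
    _ = k.factorial / (b - d) ^ k * exp (-(d * t)) := by
        rw [mul_assoc, ← exp_add]; ring_nf

lemma formalExpCoeff_neg_mul_exp_isBigO (q : ℝ⟦X⟧) {a d : ℝ} (hda : d < a) (n : ℕ) :
    (fun t => formalExpCoeff q n (-t) * exp (-(a * t))) =O[𝓟 (Set.Ici 0)]
      fun t => exp (-(d * t)) := by
  have hterm (k : ℕ) := (pow_mul_exp_neg_isBigO_exp_neg hda k).const_mul_left
    ((-1) ^ k / k.factorial * (q ^ k).coeff n)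
  refine (IsBigO.fun_sum (s := range (n + 1)) fun k _ => hterm k).congr_left fun t => ?_
  rw [formalExpCoeff, sum_mul]
  refine sum_congr rfl fun k _ => ?_
  rw [neg_pow t]
  ring

lemma exp_remainder_isBigO {F : Filter ℝ} {g : ℝ → ℝ} (hF : F ≤ 𝓝 0) (hg : g =O[F] fun x => x)
    {a d : ℝ} (hda : d < a) (N : ℕ) :
    (fun z : ℝ × ℝ => exp (-(a * z.2)) *
        (exp (-z.2 * g z.1) - ∑ k ∈ range N, (-z.2 * g z.1) ^ k / k.factorial))
      =O[F ×ˢ 𝓟 (Set.Ici 0)] fun z => z.1 ^ N * exp (-(d * z.2)) := by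
  obtain ⟨b, hdb, hba⟩ := exists_between hda
  have hsmall : ∀ᶠ x in F, |g x| < a - b := by
    have h := (hg.trans_tendsto hF).abs
    rw [abs_zero] at h
    exact h.eventually_lt_const (sub_pos.2 hba)
  have hbound : (fun z : ℝ × ℝ => exp (-(a * z.2)) *
        (exp (-z.2 * g z.1) - ∑ k ∈ range N, (-z.2 * g z.1) ^ k / k.factorial))
      =O[F ×ˢ 𝓟 (Set.Ici 0)] fun z => g z.1 ^ N * (z.2 ^ N * exp (-(b * z.2))) := by
    refine IsBigO.of_bound 1 ?_
    filter_upwards [tendsto_fst.eventually hsmall,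
      tendsto_snd.eventually (mem_principal_self (Set.Ici (0 : ℝ)))] with z hz (ht : 0 ≤ z.2)
    have habs : |-z.2 * g z.1| = z.2 * |g z.1| := by rw [abs_mul, abs_neg, abs_of_nonneg ht]
    simp only [norm_mul, norm_pow, norm_eq_abs, abs_exp, abs_of_nonneg ht, one_mul]
    calc exp (-(a * z.2)) *
          |exp (-z.2 * g z.1) - ∑ k ∈ range N, (-z.2 * g z.1) ^ k / k.factorial|
        ≤ exp (-(a * z.2)) * ((z.2 * |g z.1|) ^ N * exp (z.2 * (a - b))) := by
          grw [abs_exp_sub_sum_le, habs]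
          gcongr
      _ = |g z.1| ^ N * (z.2 ^ N * exp (-(b * z.2))) := by
          rw [mul_left_comm, ← exp_add, mul_pow]; ring_nf
  exact hbound.trans <| ((hg.pow N).comp_tendsto tendsto_fst).mul
    ((pow_mul_exp_neg_isBigO_exp_neg hdb N).comp_tendsto tendsto_snd)

lemma exp_expansion_isBigO {F : Filter ℝ} {g : ℝ → ℝ} {q : ℝ⟦X⟧} (hF : F ≤ 𝓝 0)
    (hg : HasAsymptoticSeries F g q) (hq : q.constantCoeff = 0) {a d : ℝ} (hda : d < a) (N : ℕ) :
    (fun z : ℝ × ℝ => exp (-(a * z.2)) *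
        (exp (-z.2 * g z.1) - ∑ n ∈ range N, formalExpCoeff q n (-z.2) * z.1 ^ n))
      =O[F ×ˢ 𝓟 (Set.Ici 0)] fun z => z.1 ^ N * exp (-(d * z.2)) := by
  have hterm (k : ℕ) : (fun z : ℝ × ℝ => exp (-(a * z.2)) * (-z.2) ^ k / k.factorial *
        (g z.1 ^ k - ((q ^ k).trunc N).eval z.1))
      =O[F ×ˢ 𝓟 (Set.Ici 0)] fun z => z.1 ^ N * exp (-(d * z.2)) := by
    refine ((((hg.pow hF k N).comp_tendsto tendsto_fst).mul
      ((pow_mul_exp_neg_isBigO_exp_neg hda k).comp_tendsto tendsto_snd)).const_mul_left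
        ((-1) ^ k / k.factorial)).congr_left fun z => ?_
    simp only [Function.comp_apply, neg_pow z.2]
    ring
  refine ((exp_remainder_isBigO hF (hg.isBigO_id hq) hda N).add
    (IsBigO.fun_sum (s := range N) fun k _ => hterm k)).congr_left fun z => ?_
  have hsum : ∑ k ∈ range N, exp (-(a * z.2)) * (-z.2) ^ k / k.factorial *
        (g z.1 ^ k - ((q ^ k).trunc N).eval z.1) =
      exp (-(a * z.2)) * (∑ k ∈ range N, (-z.2 * g z.1) ^ k / k.factorial -
        ∑ n ∈ range N, formalExpCoeff q n (-z.2) * z.1 ^ n) := by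
    rw [← sum_pow_mul_eval_trunc_pow hq, ← sum_sub_distrib, mul_sum]
    exact sum_congr rfl fun k _ => by rw [mul_pow]; ring
  rw [hsum]
  ring

lemma pow_isBigO_pow_principal_Ici {δ : ℝ} (hδ : 0 < δ) {m n : ℕ} (hmn : m ≤ n) :
    (fun x : ℝ => x ^ m) =O[𝓟 (Set.Ici δ)] fun x => x ^ n := by
  refine isBigO_principal.2 ⟨(δ ^ (n - m))⁻¹, fun x (hx : δ ≤ x) => ?_⟩
  have hx0 : 0 < x := hδ.trans_le hx
  rw [norm_of_nonneg (by positivity), norm_of_nonneg (by positivity), inv_mul_eq_div,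
    le_div_iff₀ (by positivity), ← pow_mul_pow_sub x hmn]
  gcongr

lemma isBigO_principal_Ioi_prod {E β : Type*} [SeminormedAddCommGroup E] {T : Set β}
    {u v : ℝ × β → E} (hnear : u =O[𝓝[>] 0 ×ˢ 𝓟 T] v)
    (hfar : ∀ δ > 0, u =O[𝓟 (Set.Ici δ ×ˢ T)] v) : u =O[𝓟 (Set.Ioi 0 ×ˢ T)] v := by
  obtain ⟨C, hC⟩ := hnear.bound
  obtain ⟨δ, hδ : 0 < δ, hsub⟩ :=
    mem_nhdsGT_iff_exists_Ioo_subset.1 (eventually_prod_principal_iff.1 hC)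
  have hnear' : u =O[𝓟 (Set.Ioo 0 δ ×ˢ T)] v :=
    isBigO_principal.2 ⟨C, fun z hz => hsub hz.1 z.2 hz.2⟩
  refine (hnear'.sup (hfar δ hδ)).mono ?_
  rw [sup_principal, principal_mono, ← Set.union_prod, Set.Ioo_union_Ici_eq_Ioi hδ]

lemma indicator_exp_expansion_isBigO {s : Set ℝ} (hs : s ∈ 𝓝[>] 0) {f : ℝ → ℝ} {p : ℝ⟦X⟧}
    (hf : HasAsymptoticSeries (𝓝[>] 0) f p) {d : ℝ} (hfd : ∀ x ∈ s, d ≤ f x)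
    (hpd : d < p.constantCoeff) (N : ℕ) :
    (fun z : ℝ × ℝ => s.indicator (fun x => exp (-(f x * z.2))) z.1 -
        ∑ n ∈ range N, formalExpCoeff (p - PowerSeries.C p.constantCoeff) n (-z.2) *
          exp (-(p.constantCoeff * z.2)) * z.1 ^ n)
      =O[𝓟 (Set.Ioi 0 ×ˢ Set.Ici 0)] fun z => z.1 ^ N * exp (-(d * z.2)) := by
  set a := p.constantCoeff
  have hF : 𝓝[>] (0 : ℝ) ≤ 𝓝 0 := nhdsWithin_le_nhds
  refine isBigO_principal_Ioi_prod ?_ fun δ hδ => ?_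
  · refine (exp_expansion_isBigO hF (hf.sub (.const a hF)) (by simp [a]) hpd N).congr' ?_ .rfl
    filter_upwards [tendsto_fst.eventually hs] with z hz
    rw [Set.indicator_of_mem hz, mul_sub, ← exp_add, mul_sum]
    congr 1
    · ring_nf
    · exact sum_congr rfl fun n _ => by ring
  · -- On `x ≥ δ` lower powers of `x` are `O(x ^ N)`, so no cancellation is needed.
    rw [← prod_principal_principal]
    have hfst {n : ℕ} (hn : n ≤ N) :=
      (pow_isBigO_pow_principal_Ici hδ hn).comp_tendsto (tendsto_fst (g := 𝓟 (Set.Ici (0 : ℝ))))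
    have hindicator : (fun z : ℝ × ℝ => s.indicator (fun x => exp (-(f x * z.2))) z.1)
        =O[𝓟 (Set.Ici δ) ×ˢ 𝓟 (Set.Ici 0)] fun z => z.1 ^ 0 * exp (-(d * z.2)) := by
      rw [prod_principal_principal]
      refine isBigO_principal.2 ⟨1, fun z hz => ?_⟩
      have ht : 0 ≤ z.2 := hz.2
      by_cases hzs : z.1 ∈ s
      · simpa [hzs] using mul_le_mul_of_nonneg_right (hfd z.1 hzs) ht
      · simp [hzs, exp_nonneg]
    refine (hindicator.trans ((hfst N.zero_le).mul (isBigO_refl _ _))).sub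
      (IsBigO.fun_sum fun n hn => ?_)
    have hcoeff := (formalExpCoeff_neg_mul_exp_isBigO (p - PowerSeries.C a) hpd n).comp_tendsto
      (tendsto_snd (f := 𝓟 (Set.Ici δ)))
    exact (hcoeff.mul (hfst (mem_range.1 hn).le)).congr_right fun z => mul_comm _ _

section Moments

variable {l a μ : ℝ}

lemma integral_pow_mul_exp_neg_mul_rpow (hl : 0 < l) (ha : 0 < a) (hμ : 0 < μ) (n k : ℕ) :
    ∫ x in Set.Ioi (0 : ℝ), (l * x ^ μ) ^ k * exp (-(a * (l * x ^ μ))) * x ^ n =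
      Gamma ((n + 1) / μ + k) / (μ * a ^ ((n + 1) / μ + k)) * l ^ (-((n + 1) / μ)) := by
  have hcongr : Set.EqOn
      (fun x : ℝ => (l * x ^ μ) ^ k * exp (-(a * (l * x ^ μ))) * x ^ n)
      (fun x => l ^ k * (x ^ (n + μ * k) * exp (-(a * l) * x ^ μ))) (Set.Ioi 0) := by
    intro x hx
    simp only [mul_pow, rpow_add hx, rpow_mul (le_of_lt hx), rpow_natCast]
    ring_nf
  have hexponent : (n + μ * k + 1) / μ = (n + 1) / μ + k := by field_simp; ring
  rw [setIntegral_congr_fun measurableSet_Ioi hcongr, integral_const_mul,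
    integral_rpow_mul_exp_neg_mul_rpow hμ (by linarith [show (0 : ℝ) ≤ n + μ * k by positivity])
      (by positivity), neg_div, hexponent, rpow_neg (by positivity), mul_rpow ha.le hl.le,
    rpow_add hl, rpow_neg hl.le, rpow_natCast]
  field_simp

lemma integrableOn_pow_mul_exp_neg_mul_rpow (hl : 0 < l) (ha : 0 < a) (hμ : 0 < μ) (n k : ℕ) :
    IntegrableOn (fun x : ℝ => (l * x ^ μ) ^ k * exp (-(a * (l * x ^ μ))) * x ^ n)
      (Set.Ioi 0) := by
  refine Integrable.of_integral_ne_zero ?_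
  have hGamma : 0 < Gamma ((n + 1) / μ + k) := Gamma_pos_of_pos (by positivity)
  rw [integral_pow_mul_exp_neg_mul_rpow hl ha hμ]
  exact (mul_pos (div_pos hGamma (by positivity)) (rpow_pos_of_pos hl _)).ne'

end Moments

/-- The coefficient of `l ^ (-(n + 1) / μ)` in the expansion of `∫ exp (-l x ^ μ f x) dx` as
`l → ∞`, when `f` has the asymptotic series `p` at `0⁺`. -/
noncomputable def laplaceMethodCoeff (μ : ℝ) (p : ℝ⟦X⟧) (n : ℕ) : ℝ :=
  ∑ k ∈ range (n + 1), (-1) ^ k / k.factorial *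
    ((p - PowerSeries.C p.constantCoeff) ^ k).coeff n *
      (Gamma ((n + 1) / μ + k) / (μ * p.constantCoeff ^ ((n + 1) / μ + k)))

section LaplaceMethod

variable {l μ : ℝ} {p : ℝ⟦X⟧}

lemma formalExpCoeff_mul_exp_mul_pow_eq_sum (q : ℝ⟦X⟧) (n : ℕ) (a t x : ℝ) :
    formalExpCoeff q n (-t) * exp (-(a * t)) * x ^ n =
      ∑ k ∈ range (n + 1), (-1) ^ k / k.factorial * (q ^ k).coeff n *
        (t ^ k * exp (-(a * t)) * x ^ n) := by
  rw [formalExpCoeff, sum_mul, sum_mul]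
  refine sum_congr rfl fun k _ => ?_
  rw [neg_pow t]
  ring

lemma integrableOn_formalExpCoeff (hl : 0 < l) (hμ : 0 < μ) {a : ℝ} (ha : 0 < a) (q : ℝ⟦X⟧)
    (n : ℕ) :
    IntegrableOn (fun x : ℝ => formalExpCoeff q n (-(l * x ^ μ)) *
      exp (-(a * (l * x ^ μ))) * x ^ n) (Set.Ioi 0) := by
  simp_rw [formalExpCoeff_mul_exp_mul_pow_eq_sum]
  exact integrable_finsetSum _ fun k _ =>
    (integrableOn_pow_mul_exp_neg_mul_rpow hl ha hμ n k).const_mul _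

lemma integral_formalExpCoeff (hl : 0 < l) (hμ : 0 < μ) (hp : 0 < p.constantCoeff) (n : ℕ) :
    ∫ x in Set.Ioi (0 : ℝ), formalExpCoeff (p - PowerSeries.C p.constantCoeff) n (-(l * x ^ μ)) *
        exp (-(p.constantCoeff * (l * x ^ μ))) * x ^ n =
      laplaceMethodCoeff μ p n * l ^ (-((n + 1) / μ)) := by
  simp_rw [formalExpCoeff_mul_exp_mul_pow_eq_sum]
  rw [integral_finsetSum _ fun k _ =>
      (integrableOn_pow_mul_exp_neg_mul_rpow hl hp hμ n k).const_mul _,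
    laplaceMethodCoeff, sum_mul]
  refine sum_congr rfl fun k _ => ?_
  rw [integral_const_mul, integral_pow_mul_exp_neg_mul_rpow hl hp hμ]
  ring

lemma integrableOn_exp_neg_mul_rpow_mul {s : Set ℝ} (hs : MeasurableSet s)
    (hs0 : s ⊆ Set.Ioi 0) {f : ℝ → ℝ} (hfm : AEStronglyMeasurable f (volume.restrict s)) {d : ℝ}
    (hd : 0 < d) (hfd : ∀ x ∈ s, d ≤ f x) (hl : 0 < l) (hμ : 0 < μ) :
    IntegrableOn (fun x => exp (-(f x * (l * x ^ μ)))) s := by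
  have hdom : IntegrableOn (fun x : ℝ => exp (-(d * (l * x ^ μ)))) s := by
    simpa using (integrableOn_pow_mul_exp_neg_mul_rpow hl hd hμ 0 0).mono_set hs0
  refine hdom.mono' ?_ (ae_restrict_of_forall_mem hs fun x hx => ?_)
  · exact continuous_exp.comp_aestronglyMeasurable
      (hfm.mul ((by fun_prop : Measurable fun x : ℝ => l * x ^ μ).aestronglyMeasurable)).neg
  · have hx0 : 0 < x := hs0 hx
    rw [norm_of_nonneg (exp_nonneg _)]
    gcongr
    exact hfd x hx

theorem laplaceMethod_isBigO (hμ : 0 < μ) {s : Set ℝ} (hs : MeasurableSet s)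
    (hs0 : s ⊆ Set.Ioi 0) (hs_nhds : s ∈ 𝓝[>] 0) {f : ℝ → ℝ}
    (hfm : AEStronglyMeasurable f (volume.restrict s))
    (hf : HasAsymptoticSeries (𝓝[>] 0) f p) {c : ℝ} (hc : 0 < c) (hfc : ∀ x ∈ s, c ≤ f x)
    (N : ℕ) :
    (fun l : ℝ => (∫ x in s, exp (-(f x * (l * x ^ μ)))) -
        ∑ n ∈ range N, laplaceMethodCoeff μ p n * l ^ (-((n + 1) / μ)))
      =O[atTop] fun l => l ^ (-((N + 1) / μ)) := by
  have hcp : c ≤ p.constantCoeff :=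
    ge_of_tendsto (hf.tendsto nhdsWithin_le_nhds) (eventually_of_mem hs_nhds hfc)
  obtain ⟨d, hd, hdc⟩ := exists_between hc
  have hp : 0 < p.constantCoeff := hc.trans_le hcp
  have hfd (x : ℝ) (hx : x ∈ s) : d ≤ f x := hdc.le.trans (hfc x hx)
  obtain ⟨C, hC⟩ := isBigO_principal.1 <|
    indicator_exp_expansion_isBigO hs_nhds hf hfd (hdc.trans_le hcp) N
  refine IsBigO.of_bound (C * (Gamma ((N + 1) / μ) / (μ * d ^ ((N + 1) / μ)))) ?_
  filter_upwards [eventually_gt_atTop 0] with l hl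
  have hterms (n : ℕ) := integrableOn_formalExpCoeff hl hμ hp
    (p - PowerSeries.C p.constantCoeff) n
  have hexp : IntegrableOn (s.indicator fun x => exp (-(f x * (l * x ^ μ)))) (Set.Ioi 0) :=
    ((integrable_indicator_iff hs).2
      (integrableOn_exp_neg_mul_rpow_mul hs hs0 hfm hd hfd hl hμ)).integrableOn
  have hmoment := integral_pow_mul_exp_neg_mul_rpow hl hd hμ N 0
  have hmajorant := (integrableOn_pow_mul_exp_neg_mul_rpow hl hd hμ N 0).const_mul C
  simp only [pow_zero, one_mul, Nat.cast_zero, add_zero] at hmoment hmajorant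
  simp_rw [← integral_formalExpCoeff hl hμ hp]
  rw [← Set.inter_eq_right.2 hs0, ← setIntegral_indicator hs,
    ← integral_finsetSum _ fun n _ => hterms n,
    ← integral_sub hexp (integrable_finsetSum _ fun n _ => hterms n),
    norm_of_nonneg (rpow_nonneg hl.le _), mul_assoc, ← hmoment, ← integral_const_mul]
  refine norm_integral_le_of_norm_le hmajorant
    (ae_restrict_of_forall_mem measurableSet_Ioi fun x (hx : 0 < x) => ?_)
  have hxt := hC (x, l * x ^ μ) ⟨hx, Set.mem_Ici.2 (by positivity)⟩
  have hnonneg : 0 ≤ x ^ N * exp (-(d * (l * x ^ μ))) := by positivity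
  rw [norm_of_nonneg hnonneg, mul_comm (x ^ N)] at hxt
  exact hxt

end LaplaceMethod

lemma hasAsymptoticSeries_neg_sub_log_one_sub_div_sq :
    HasAsymptoticSeries (𝓝[>] (0 : ℝ)) (fun x => (-x - log (1 - x)) / x ^ 2)
      (PowerSeries.mk fun m => 1 / ((m : ℝ) + 2)) := by
  intro N
  refine IsBigO.of_bound 2 ?_
  filter_upwards [Ioo_mem_nhdsGT (show (0 : ℝ) < 1 / 2 by norm_num)] with x ⟨hx0, hx⟩
  have hlog := abs_log_sub_add_sum_range_le (x := x) (by rw [abs_of_pos hx0]; linarith) (N + 1)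
  have hsum : ∑ i ∈ range (N + 1), x ^ (i + 1) / ((i : ℝ) + 1) =
      x + x ^ 2 * ∑ m ∈ range N, 1 / ((m : ℝ) + 2) * x ^ m := by
    rw [sum_range_succ', mul_sum, add_comm]
    congr 1
    · simp
    · refine sum_congr rfl fun m _ => ?_
      push_cast
      ring
  have hrem : (-x - log (1 - x)) / x ^ 2 - ∑ m ∈ range N, 1 / ((m : ℝ) + 2) * x ^ m =
      -(∑ i ∈ range (N + 1), x ^ (i + 1) / ((i : ℝ) + 1) + log (1 - x)) / x ^ 2 := by
    rw [hsum]; field_simp; ring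
  simp only [eval_trunc_eq_sum_range, PowerSeries.coeff_mk]
  rw [hrem, norm_div, norm_neg, norm_eq_abs, norm_of_nonneg (by positivity),
    norm_of_nonneg (by positivity), div_le_iff₀ (by positivity)]
  rw [abs_of_pos hx0] at hlog
  calc _ ≤ x ^ (N + 1 + 1) / (1 - x) := hlog
    _ ≤ x ^ (N + 1 + 1) / (1 / 2) := by gcongr; linarith
    _ = 2 * x ^ N * x ^ 2 := by ring

lemma half_le_neg_sub_log_one_sub_div_sq {x : ℝ} (hx0 : 0 < x) (hx1 : x < 1) :
    1 / 2 ≤ (-x - log (1 - x)) / x ^ 2 := by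
  have hlog : x + x ^ 2 / 2 ≤ -log (1 - x) := by
    have hpartial := sum_le_hasSum (range 2) (fun i _ => by positivity)
      (hasSum_pow_div_log_of_abs_lt_one (x := x) (by rwa [abs_of_pos hx0]))
    simpa [sum_range_succ, one_add_one_eq_two] using hpartial
  rw [le_div_iff₀ (by positivity)]
  linarith

lemma obell_neg_one_pow_mul (b : ℕ → ℝ) (n k : ℕ) :
    obell (fun m => (-1) ^ m * b m) n k = (-1) ^ n * obell b n k := by
  have hrescale : (PowerSeries.mk fun m => if m = 0 then 0 else (-1) ^ m * b m) =
      PowerSeries.rescale (-1) (PowerSeries.mk fun m => if m = 0 then 0 else b m) := by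
    ext m
    simp [PowerSeries.coeff_rescale]
  rw [obell, hrescale, ← map_pow, PowerSeries.coeff_rescale, obell]

lemma coeff_sub_constantCoeff_pow (b : ℕ → ℝ) (n k : ℕ) :
    ((PowerSeries.mk b - PowerSeries.C (PowerSeries.mk b).constantCoeff) ^ k).coeff n =
      obell b n k := by
  have hseries : PowerSeries.mk b - PowerSeries.C (PowerSeries.mk b).constantCoeff =
      PowerSeries.mk fun m => if m = 0 then 0 else b m := by
    ext m
    rcases m with _ | m <;> simp
  rw [hseries, obell]

lemma laplaceMethodCoeff_two_eq (n : ℕ) :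
    laplaceMethodCoeff 2 (PowerSeries.mk fun m => 1 / ((m : ℝ) + 2)) n =
      Gamma ((n + 1) / 2) * ((-1) ^ n * laplaceCoeff n) := by
  have hGamma : Gamma (((n : ℝ) + 1) / 2) ≠ 0 := (Gamma_pos_of_pos (by positivity)).ne'
  have hobell (k : ℕ) : obell (fun m => 1 / ((m : ℝ) + 2)) n k =
      (-1) ^ n * obell (fun m => (-1) ^ m / ((m : ℝ) + 2)) n k := by
    rw [← obell_neg_one_pow_mul]
    congr 1 with m
    rw [← mul_div_assoc, ← mul_pow]
    norm_num
  have hpow (k : ℕ) : (1 / 2 : ℝ) ^ (((n : ℝ) + 1) / 2 + k) = (2 ^ (((n : ℝ) + 1) / 2 + k))⁻¹ := by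
    rw [one_div, inv_rpow zero_le_two]
  rw [laplaceMethodCoeff, laplaceCoeff, ← mul_assoc, ← mul_assoc, mul_sum]
  refine sum_congr rfl fun k _ => ?_
  rw [coeff_sub_constantCoeff_pow, hobell,
    show (PowerSeries.mk fun m => 1 / ((m : ℝ) + 2)).constantCoeff = 1 / 2 by simp, hpow]
  field_simp

end

/-- Asymptotic expansion of `∫_0^1 e^{-λ(-x - log(1-x))} dx` as `λ → +∞`: the
coefficients are `(-1)^n c_n`, where `c_n` are the coefficients for
`∫_0^∞ e^{-λ(x - log(1+x))} dx`. -/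
theorem laplace_integral_expansion_reflected (N : ℕ) :
    (fun l : ℝ =>
        (∫ x in Set.Ioo (0 : ℝ) 1, Real.exp (-l * (-x - Real.log (1 - x)))) -
          ∑ n ∈ Finset.range N,
            Real.Gamma (((n : ℝ) + 1) / 2) * ((-1 : ℝ) ^ n * laplaceCoeff n) *
              l ^ (-(((n : ℝ) + 1) / 2)))
      =O[atTop] fun l : ℝ => l ^ (-(((N : ℝ) + 1) / 2)) := by
  have hmeas : AEStronglyMeasurable (fun x : ℝ => (-x - log (1 - x)) / x ^ 2)
      (volume.restrict (Set.Ioo 0 1)) :=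
    (by fun_prop : Measurable fun x : ℝ => (-x - log (1 - x)) / x ^ 2).aestronglyMeasurable
  have hexpansion := laplaceMethod_isBigO two_pos measurableSet_Ioo Set.Ioo_subset_Ioi_self
    (Ioo_mem_nhdsGT one_pos) hmeas hasAsymptoticSeries_neg_sub_log_one_sub_div_sq
    one_half_pos (fun x hx => half_le_neg_sub_log_one_sub_div_sq hx.1 hx.2) N
  have hintegral (l : ℝ) : ∫ x in Set.Ioo (0 : ℝ) 1, exp (-l * (-x - log (1 - x))) =
      ∫ x in Set.Ioo (0 : ℝ) 1, exp (-((-x - log (1 - x)) / x ^ 2 * (l * x ^ (2 : ℝ)))) := by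
    refine setIntegral_congr_fun measurableSet_Ioo fun x hx => ?_
    have hx0 : x ≠ 0 := hx.1.ne'
    simp only [rpow_two]
    field_simp
  simpa only [hintegral, laplaceMethodCoeff_two_eq] using hexpansion
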